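/- Fix a real number π with 0 < π < 1, and define f' : [0,1] × [0,1] → ℝ by f'(r, p) = 0 if p ≤ π, and f'(r, p) = 2·r·q / (r + q) with q = (p − π)/(1 − π) if p > π (the harmonic mean of the recall r and the precision normalized to random guessing). Then f' vanishes on the minimum precision curve, i.e. f'(r, π·r / (1 − π + π·r)) = 0 for all r ∈ [0,1], and f' is nondecreasing in its first argument for every fixed value of the second and nondecreasing in its second argument for every fixed value of the first. -/

import Mathlib

/-!
Since the harmonic mean vanishes when one of its arguments does, the two branches defining `f'`
merge into one formula: `f' r p` is the harmonic mean of `r` and the positive part of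
`(p - π) / (1 - π)`. Monotonicity in each argument is then that of the harmonic mean on nonnegative
numbers, and `f'` vanishes on the minimum precision curve because that curve stays below `π`.
-/

open Set

section ModifiedF1

variable {K : Type*} [Field K]

/-- The harmonic mean of `x` and `y`; it is `0` when `x + y = 0`, by the convention `a / 0 = 0`. -/
def harmonicMean (x y : K) : K :=
  2 * x * y / (x + y)

/-- The minimum precision curve of PR space at skew `π`: the least precision attainable at
recall `r`. -/
def minPrecision (π r : K) : K :=
  π * r / (1 - π + π * r)

theorem harmonicMean_comm (x y : K) : harmonicMean x y = harmonicMean y x := by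
  rw [harmonicMean, harmonicMean, mul_right_comm, add_comm]

theorem harmonicMean_zero_right (x : K) : harmonicMean x 0 = 0 := by
  rw [harmonicMean, mul_zero, zero_div]

variable [LinearOrder K]

/-- The precision `p` normalized to random guessing at skew `π`: it sends `π` to `0` and `1` to `1`,
and is truncated to `0` below `π`. -/
def normalizedPrecision (π p : K) : K :=
  ((p - π) / (1 - π))⁺

/-- The modified F1 score at skew `π`, as a single harmonic mean; `modifiedF1_eq_ite` recovers the
definition by cases on `p ≤ π`. -/
def modifiedF1 (π r p : K) : K :=
  harmonicMean r (normalizedPrecision π p)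

theorem normalizedPrecision_nonneg (π p : K) : 0 ≤ normalizedPrecision π p :=
  posPart_nonneg _

variable [IsStrictOrderedRing K] {x y π r p : K}

theorem monotoneOn_harmonicMean_left (hy : 0 ≤ y) :
    MonotoneOn (fun x => harmonicMean x y) (Ici 0) := by
  intro x₁ (hx₁ : 0 ≤ x₁) x₂ (hx₂ : 0 ≤ x₂) hx
  rcases hy.eq_or_lt with rfl | hy_pos
  · simp only [harmonicMean_zero_right, le_refl]
  · have cross : x₁ * (x₂ + y) ≤ x₂ * (x₁ + y) := by
      linarith [mul_le_mul_of_nonneg_right hx hy]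
    have ratio_le : x₁ / (x₁ + y) ≤ x₂ / (x₂ + y) :=
      (div_le_div_iff₀ (by positivity) (by positivity)).2 cross
    calc 2 * x₁ * y / (x₁ + y) = 2 * y * (x₁ / (x₁ + y)) := by ring
      _ ≤ 2 * y * (x₂ / (x₂ + y)) := mul_le_mul_of_nonneg_left ratio_le (by positivity)
      _ = 2 * x₂ * y / (x₂ + y) := by ring

theorem monotoneOn_harmonicMean_right (hx : 0 ≤ x) : MonotoneOn (harmonicMean x) (Ici 0) :=
  (monotoneOn_harmonicMean_left hx).congr fun y _ => harmonicMean_comm y x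

theorem minPrecision_le (hπ₀ : 0 ≤ π) (hπ₁ : π < 1) (hr : r ∈ Icc 0 1) : minPrecision π r ≤ π := by
  have one_sub_pos : 0 < 1 - π := sub_pos.2 hπ₁
  have recall_le : r ≤ 1 - π + π * r := by
    linarith [mul_le_mul_of_nonneg_left hr.2 one_sub_pos.le]
  have denom_pos : 0 < 1 - π + π * r := add_pos_of_pos_of_nonneg one_sub_pos (mul_nonneg hπ₀ hr.1)
  exact (div_le_iff₀ denom_pos).2 (mul_le_mul_of_nonneg_left recall_le hπ₀)

theorem normalizedPrecision_of_le (hπ : π < 1) (hp : p ≤ π) : normalizedPrecision π p = 0 :=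
  posPart_of_nonpos (div_nonpos_of_nonpos_of_nonneg (sub_nonpos.2 hp) (sub_pos.2 hπ).le)

theorem normalizedPrecision_of_ge (hπ : π < 1) (hp : π ≤ p) :
    normalizedPrecision π p = (p - π) / (1 - π) :=
  posPart_of_nonneg (div_nonneg (sub_nonneg.2 hp) (sub_pos.2 hπ).le)

theorem monotone_normalizedPrecision (hπ : π < 1) : Monotone (normalizedPrecision π) :=
  fun _ _ hp => posPart_mono
    (div_le_div_of_nonneg_right (sub_le_sub_right hp π) (sub_pos.2 hπ).le)

theorem modifiedF1_of_le (hπ : π < 1) (hp : p ≤ π) : modifiedF1 π r p = 0 := by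
  rw [modifiedF1, normalizedPrecision_of_le hπ hp, harmonicMean_zero_right]

theorem modifiedF1_eq_ite (hπ : π < 1) (r p : K) :
    modifiedF1 π r p =
      if p ≤ π then 0
      else 2 * r * ((p - π) / (1 - π)) / (r + (p - π) / (1 - π)) := by
  split_ifs with hp
  · exact modifiedF1_of_le hπ hp
  · rw [modifiedF1, normalizedPrecision_of_ge hπ (not_le.1 hp).le, harmonicMean]

theorem modifiedF1_minPrecision (hπ₀ : 0 ≤ π) (hπ₁ : π < 1) (hr : r ∈ Icc 0 1) :
    modifiedF1 π r (minPrecision π r) = 0 :=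
  modifiedF1_of_le hπ₁ (minPrecision_le hπ₀ hπ₁ hr)

theorem monotoneOn_modifiedF1_recall (π p : K) :
    MonotoneOn (fun r => modifiedF1 π r p) (Ici 0) :=
  monotoneOn_harmonicMean_left (normalizedPrecision_nonneg π p)

theorem monotone_modifiedF1_precision (hπ : π < 1) (hr : 0 ≤ r) : Monotone (modifiedF1 π r) :=
  fun p₁ p₂ hp => monotoneOn_harmonicMean_right hr (normalizedPrecision_nonneg π p₁)
    (normalizedPrecision_nonneg π p₂) (monotone_normalizedPrecision hπ hp)

theorem modified_f1_construction_general (hπ₀ : 0 ≤ π) (hπ₁ : π < 1) (f' : K → K → K)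
    (hf : ∀ r p : K, f' r p =
      if p ≤ π then 0
      else 2 * r * ((p - π) / (1 - π)) / (r + (p - π) / (1 - π))) :
    (∀ r ∈ Icc (0 : K) 1, f' r (π * r / (1 - π + π * r)) = 0) ∧
    (∀ p, MonotoneOn (fun r => f' r p) (Ici 0)) ∧
    (∀ r, 0 ≤ r → Monotone (f' r)) := by
  obtain rfl : f' = modifiedF1 π := by
    ext r p
    rw [hf, modifiedF1_eq_ite hπ₁]
  exact ⟨fun _ hr => modifiedF1_minPrecision hπ₀ hπ₁ hr, monotoneOn_modifiedF1_recall π,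
    fun _ hr => monotone_modifiedF1_precision hπ₁ hr⟩

end ModifiedF1

/-- The modified F1 score that is 0 for p ≤ π and otherwise the harmonic mean
of r and the normalized precision (p−π)/(1−π) vanishes on the minimum
precision curve and is nondecreasing in each argument on [0,1] × [0,1]. -/
theorem modified_f1_construction
    (π : ℝ) (h0 : 0 < π) (h1 : π < 1) (f' : ℝ → ℝ → ℝ)
    (hf : ∀ r p : ℝ, f' r p =
      if p ≤ π then 0
      else 2 * r * ((p - π) / (1 - π)) / (r + (p - π) / (1 - π))) :
    (∀ r ∈ Set.Icc (0:ℝ) 1, f' r (π * r / (1 - π + π * r)) = 0) ∧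
    (∀ p ∈ Set.Icc (0:ℝ) 1, ∀ r₁ ∈ Set.Icc (0:ℝ) 1, ∀ r₂ ∈ Set.Icc (0:ℝ) 1,
      r₁ ≤ r₂ → f' r₁ p ≤ f' r₂ p) ∧
    (∀ r ∈ Set.Icc (0:ℝ) 1, ∀ p₁ ∈ Set.Icc (0:ℝ) 1, ∀ p₂ ∈ Set.Icc (0:ℝ) 1,
      p₁ ≤ p₂ → f' r p₁ ≤ f' r p₂) := by
  obtain ⟨vanishes, mono_recall, mono_precision⟩ := modified_f1_construction_general h0.le h1 f' hf
  exact ⟨vanishes, fun p _ _ hr₁ _ hr₂ hr => mono_recall p hr₁.1 hr₂.1 hr,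
    fun r hr _ _ _ _ hp => mono_precision r hr.1 hp⟩
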